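/- Let G be a connected simple graph on n vertices with positive integer edge weights c, let W be the minimum weight of a closed walk in G containing all vertices of G, and let T be a closed walk in G of length 2n − 2 + k (for some k ∈ ℕ) containing all vertices of G. Then the weight of T is at least W + k. -/

import Mathlib

/-- The total weight of a walk in a graph with edge weights `c`. -/
def walkWeight {V : Type*} {G : SimpleGraph V} (c : V → V → ℕ) {u w : V}
    (p : G.Walk u w) : ℕ :=
  (p.darts.map fun d => c d.toProd.1 d.toProd.2).sum

/-!
The edges of `T` form a connected multigraph on `V` with all degrees even. Take such a multigraph
`M` among the sub-multisets of the edges of `T`, minimal under inclusion. Outside a spanning tree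
of `M`, any `n` of its edges would contain a cycle (a loop or a pair of parallel edges counting as
one), whose removal would keep `M` connected and even; so `M` has at most `2 (n - 1)` edges.
By Euler's theorem `M` is traversed by a closed walk, which weighs at least `W`, and the at least
`k` edges of `T` outside `M` weigh at least `1` each.
-/

section

open SimpleGraph

variable {V : Type*} {G : SimpleGraph V} {M : Multiset (Sym2 V)} {u v : V}

/-- The boundary of a multiset of edges over `ZMod 2`: an edge with ends `x` and `y` contributes
`x + y`, so that the coefficient at a vertex is the parity of its degree (loops counting twice). -/
noncomputable def edgeBoundary : Multiset (Sym2 V) →+ (V →₀ ZMod 2) :=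
  Multiset.sumAddMonoidHom.comp <| Multiset.mapAddMonoidHom <|
    Sym2.lift ⟨fun x y => Finsupp.single x 1 + Finsupp.single y 1, fun _ _ => add_comm _ _⟩

theorem edgeBoundary_cons (x y : V) (M : Multiset (Sym2 V)) :
    edgeBoundary (s(x, y) ::ₘ M) =
      Finsupp.single x 1 + Finsupp.single y 1 + edgeBoundary M := by
  simp [edgeBoundary]

theorem edgeBoundary_edges (p : G.Walk u v) :
    edgeBoundary (p.edges : Multiset (Sym2 V)) = Finsupp.single u 1 + Finsupp.single v 1 := by
  induction p with
  | nil => simp [ZModModule.add_self]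
  | @cons a b d h p ih =>
    rw [Walk.edges_cons, ← Multiset.cons_coe, edgeBoundary_cons, ih, add_assoc,
      ← add_assoc (Finsupp.single b 1), ZModModule.add_self, zero_add]

theorem edgeBoundary_edges_of_closed (p : G.Walk u u) :
    edgeBoundary (p.edges : Multiset (Sym2 V)) = 0 := by
  rw [edgeBoundary_edges, ZModModule.add_self]

theorem exists_mem_of_edgeBoundary_apply_ne_zero (h : edgeBoundary M v ≠ 0) :
    ∃ e ∈ M, v ∈ e := by
  contrapose! h
  induction M using Multiset.induction with
  | empty => simp
  | cons e M ih =>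
    induction e with | _ x y
    have hv := h _ (Multiset.mem_cons_self _ _)
    rw [Sym2.mem_iff, not_or] at hv
    simp [edgeBoundary_cons, Ne.symm hv.1, Ne.symm hv.2,
      ih fun e he => h e (Multiset.mem_cons_of_mem he)]

theorem exists_walk_edges_le_of_edgeBoundary_eq (hMG : ∀ e ∈ M, e ∈ G.edgeSet)
    (hM : edgeBoundary M = Finsupp.single u 1 + Finsupp.single v 1) :
    ∃ p : G.Walk u v, (p.edges : Multiset (Sym2 V)) ≤ M := by
  induction M using Multiset.strongInductionOn generalizing u with | _ M ih
  obtain rfl | huv := eq_or_ne u v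
  · exact ⟨.nil, by simp⟩
  have hu : edgeBoundary M u ≠ 0 := by simp [hM, huv]
  obtain ⟨e, heM, hue⟩ := exists_mem_of_edgeBoundary_apply_ne_zero hu
  obtain ⟨w, rfl⟩ := Sym2.mem_iff_exists.mp hue
  obtain ⟨N, rfl⟩ := Multiset.exists_cons_of_mem heM
  have hN : edgeBoundary N = Finsupp.single w 1 + Finsupp.single v 1 := by
    rw [edgeBoundary_cons, add_assoc, add_right_inj] at hM
    rw [← hM, ← add_assoc, ZModModule.add_self, zero_add]
  obtain ⟨p, hp⟩ := ih N (Multiset.lt_cons_self _ _)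
    (fun e he => hMG e (Multiset.mem_cons_of_mem he)) hN
  exact ⟨.cons (hMG _ heM) p, Multiset.cons_le_cons _ hp⟩

theorem exists_closed_walk_edges_le_of_edgeBoundary_eq_zero (hMG : ∀ e ∈ M, e ∈ G.edgeSet)
    (hM : edgeBoundary M = 0) (huv : s(u, v) ∈ M) :
    ∃ p : G.Walk u u, ¬p.Nil ∧ (p.edges : Multiset (Sym2 V)) ≤ M := by
  obtain ⟨N, rfl⟩ := Multiset.exists_cons_of_mem huv
  have hN : edgeBoundary N = Finsupp.single v 1 + Finsupp.single u 1 := by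
    rw [edgeBoundary_cons, ← ZModModule.sub_eq_add, sub_eq_zero] at hM
    rw [← hM, add_comm]
  obtain ⟨p, hp⟩ := exists_walk_edges_le_of_edgeBoundary_eq
    (fun e he => hMG e (Multiset.mem_cons_of_mem he)) hN
  exact ⟨.cons (hMG _ huv) p, Walk.not_nil_cons, Multiset.cons_le_cons _ hp⟩

theorem card_edgeFinset_lt_of_isAcyclic [Fintype V] [Nonempty V] [Fintype G.edgeSet]
    (hG : G.IsAcyclic) : G.edgeFinset.card < Fintype.card V := by
  classical
  obtain ⟨F, hGF, -, hF⟩ := connected_top.exists_isTree_le_of_le_of_isAcyclic le_top hG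
  rw [← hF.card_edgeFinset, Nat.lt_succ_iff]
  exact Finset.card_le_card (edgeFinset_mono hGF)

/-- The simple graph underlying a multiset of edges, obtained by forgetting the multiplicities
and the loops. -/
def edgeGraph (M : Multiset (Sym2 V)) : SimpleGraph V :=
  fromEdgeSet {e | e ∈ M}

theorem edgeGraph_adj : (edgeGraph M).Adj u v ↔ s(u, v) ∈ M ∧ u ≠ v :=
  fromEdgeSet_adj _

theorem mem_edgeSet_edgeGraph {e : Sym2 V} : e ∈ (edgeGraph M).edgeSet ↔ e ∈ M ∧ ¬e.IsDiag := by
  simp [edgeGraph]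

theorem exists_edgeBoundary_eq_zero_of_card_le [Fintype V] [Nonempty V]
    (hM : Fintype.card V ≤ M.card) : ∃ C ≤ M, C ≠ 0 ∧ edgeBoundary C = 0 := by
  classical
  by_contra! h
  have noLoop : ∀ e ∈ M, ¬e.IsDiag := by
    intro e he hdiag
    induction e with | _ x y
    obtain rfl : x = y := hdiag
    refine h {s(x, x)} (Multiset.singleton_le.2 he) (Multiset.singleton_ne_zero _) ?_
    rw [← Multiset.cons_zero, edgeBoundary_cons, ZModModule.add_self, map_zero, zero_add]
  have nodup : M.Nodup := by
    rw [Multiset.nodup_iff_le]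
    intro e he
    refine h _ he Multiset.cons_ne_zero ?_
    rw [← Multiset.singleton_add, ← Multiset.singleton_add, map_add, map_add, map_zero, add_zero,
      ZModModule.add_self]
  have acyclic : (edgeGraph M).IsAcyclic := by
    intro x c hc
    refine h c.edges ?_ (by simpa using hc.ne_nil) (edgeBoundary_edges_of_closed c)
    rw [Multiset.le_iff_subset (Multiset.coe_nodup.2 hc.edges_nodup)]
    exact fun e he => (mem_edgeSet_edgeGraph.1 (c.edges_subset_edgeSet he)).1
  have edges_eq : (edgeGraph M).edgeFinset = M.toFinset := by
    ext e
    simpa [mem_edgeSet_edgeGraph] using noLoop e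
  have := card_edgeFinset_lt_of_isAcyclic acyclic
  rw [edges_eq, Multiset.toFinset_card_of_nodup nodup] at this
  omega

theorem edgeGraph_edges_connected_iff (p : G.Walk u v) :
    (edgeGraph (p.edges : Multiset (Sym2 V))).Connected ↔ ∀ w, w ∈ p.support := by
  classical
  constructor
  · intro hconn w
    by_contra hw
    obtain ⟨q⟩ := hconn.preconnected u w
    obtain ⟨d, -, -, hd⟩ := q.exists_boundary_dart {x | x ∈ p.support} p.start_mem_support hw
    exact hd (p.snd_mem_support_of_mem_edges (edgeGraph_adj.1 d.adj).1)
  · intro hspan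
    have hreach (w : V) : (edgeGraph (p.edges : Multiset (Sym2 V))).Reachable u w := by
      refine ⟨(p.takeUntil w (hspan w)).transfer _ fun e he => ?_⟩
      have hep := p.edges_takeUntil_subset_edges (hspan w) he
      exact mem_edgeSet_edgeGraph.2
        ⟨hep, G.not_isDiag_of_mem_edgeSet (p.edges_subset_edgeSet hep)⟩
    have : Nonempty V := ⟨u⟩
    exact ⟨fun x y => (hreach x).symm.trans (hreach y)⟩

/-- A multiset of edges is Eulerian if it has even degrees and is connected as a multigraph on the
whole of `V`, counting the vertices that lie on no edge. -/
structure IsEulerian (M : Multiset (Sym2 V)) : Prop where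
  edgeBoundary_eq_zero : edgeBoundary M = 0
  connected : (edgeGraph M).Connected

theorem isEulerian_edges_iff (p : G.Walk u u) :
    IsEulerian (p.edges : Multiset (Sym2 V)) ↔ ∀ w, w ∈ p.support :=
  ⟨fun h => (edgeGraph_edges_connected_iff p).1 h.connected,
    fun h => ⟨edgeBoundary_edges_of_closed p, (edgeGraph_edges_connected_iff p).2 h⟩⟩

theorem card_add_two_le_of_minimal_isEulerian [Fintype V] (hM : Minimal IsEulerian M) :
    M.card + 2 ≤ 2 * Fintype.card V := by
  classical
  have := hM.prop.connected.nonempty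
  obtain ⟨F, hFM, hF⟩ := hM.prop.connected.exists_isTree_le
  have hle : F.edgeFinset.val ≤ M := by
    rw [Multiset.le_iff_subset F.edgeFinset.nodup]
    exact fun e he => (mem_edgeSet_edgeGraph.1 (edgeSet_mono hFM (mem_edgeFinset.1 he))).1
  obtain ⟨R, rfl⟩ := Multiset.le_iff_exists_add.1 hle
  have hR : R.card < Fintype.card V := by
    by_contra! hcard
    obtain ⟨C, hCR, hC, hC0⟩ := exists_edgeBoundary_eq_zero_of_card_le hcard
    obtain ⟨R', rfl⟩ := Multiset.le_iff_exists_add.1 hCR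
    have hEuler : IsEulerian (F.edgeFinset.val + R') := by
      refine ⟨?_, hF.connected.mono fun x y hxy => edgeGraph_adj.2 ⟨?_, hxy.ne⟩⟩
      · simpa [hC0] using hM.prop.edgeBoundary_eq_zero
      · exact Multiset.mem_add.2 (.inl (mem_edgeFinset.2 hxy))
    exact hM.not_prop_of_lt (by simpa [pos_iff_ne_zero] using hC) hEuler
  have hFcard := hF.card_edgeFinset
  rw [Multiset.card_add, Finset.card_val]
  omega

theorem exists_mem_support_of_connected_edgeGraph_add (p : G.Walk u v) {N : Multiset (Sym2 V)}
    (hconn : (edgeGraph ((p.edges : Multiset (Sym2 V)) + N)).Connected) (hN : N ≠ 0) :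
    ∃ x ∈ p.support, ∃ y, s(x, y) ∈ N := by
  obtain ⟨e, he⟩ := Multiset.exists_mem_of_ne_zero hN
  induction e with | _ a b
  by_cases ha : a ∈ p.support
  · exact ⟨a, ha, b, he⟩
  obtain ⟨q⟩ := hconn.preconnected u a
  obtain ⟨d, -, hd₁, hd₂⟩ := q.exists_boundary_dart {x | x ∈ p.support} p.start_mem_support ha
  refine ⟨d.fst, hd₁, d.snd, ?_⟩
  exact (Multiset.mem_add.1 (edgeGraph_adj.1 d.adj).1).resolve_left
    fun h => hd₂ (p.snd_mem_support_of_mem_edges (Multiset.mem_coe.1 h))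

theorem exists_walk_edges_eq_add (p : G.Walk u v) {x : V} (hx : x ∈ p.support)
    (q : G.Walk x x) :
    ∃ r : G.Walk u v, (r.edges : Multiset (Sym2 V)) = p.edges + q.edges := by
  obtain ⟨p₁, p₂, rfl⟩ := Walk.mem_support_iff_exists_append.1 hx
  refine ⟨(p₁.append q).append p₂, ?_⟩
  simp only [Walk.edges_append, ← Multiset.coe_add, add_right_comm]

theorem IsEulerian.exists_closed_walk_edges_eq (hM : IsEulerian M)
    (hMG : ∀ e ∈ M, e ∈ G.edgeSet) (u : V) :
    ∃ p : G.Walk u u, (p.edges : Multiset (Sym2 V)) = M := by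
  obtain ⟨N, ⟨p, rfl⟩, hmin⟩ := exists_minimal_of_wellFoundedLT
    (fun N => ∃ p : G.Walk u u, (p.edges : Multiset (Sym2 V)) + N = M) ⟨M, .nil, by simp⟩
  by_contra! hp
  have hN : N ≠ 0 := by
    rintro rfl
    exact hp p (add_zero _).symm
  obtain ⟨x, hx, y, hxy⟩ := exists_mem_support_of_connected_edgeGraph_add p hM.connected hN
  have hN0 : edgeBoundary N = 0 := by
    simpa [edgeBoundary_edges_of_closed] using hM.edgeBoundary_eq_zero
  obtain ⟨q, hq, hqN⟩ := exists_closed_walk_edges_le_of_edgeBoundary_eq_zero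
    (fun e he => hMG e (Multiset.mem_add.2 (.inr he))) hN0 hxy
  obtain ⟨N', rfl⟩ := Multiset.le_iff_exists_add.1 hqN
  obtain ⟨r, hr⟩ := exists_walk_edges_eq_add p hx q
  have hq0 : (q.edges : Multiset (Sym2 V)) = 0 := by
    simpa using hmin ⟨r, by rw [hr, add_assoc]⟩ (Multiset.le_add_left _ _)
  exact hq (Walk.edges_eq_nil.1 (Multiset.coe_eq_zero _ |>.1 hq0))

theorem exists_closed_walk_edges_le_length_le [Fintype V] (T : G.Walk u u)
    (hT : ∀ w, w ∈ T.support) :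
    ∃ p : G.Walk u u, (∀ w, w ∈ p.support) ∧ (p.edges : Multiset (Sym2 V)) ≤ T.edges ∧
      p.length + 2 ≤ 2 * Fintype.card V := by
  obtain ⟨M, hMT, hM⟩ := exists_minimal_le_of_wellFoundedLT IsEulerian _
    ((isEulerian_edges_iff T).2 hT)
  obtain ⟨p, rfl⟩ := hM.prop.exists_closed_walk_edges_eq (G := G)
    (fun e he => T.edges_subset_edgeSet (Multiset.mem_of_le hMT he)) u
  exact ⟨p, (isEulerian_edges_iff p).1 hM.prop, hMT,
    by simpa using card_add_two_le_of_minimal_isEulerian hM⟩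

theorem walkWeight_eq_sum_map_edges {c : V → V → ℕ} (hsymm : ∀ u v : V, c u v = c v u)
    (p : G.Walk u v) :
    walkWeight c p =
      ((p.edges : Multiset (Sym2 V)).map (Sym2.lift ⟨c, hsymm⟩)).sum := by
  rw [walkWeight, Walk.edges, Multiset.map_coe, Multiset.sum_coe, List.map_map]
  rfl

theorem walkWeight_add_length_le {c : V → V → ℕ} (hsymm : ∀ u v : V, c u v = c v u)
    (hpos : ∀ u v : V, G.Adj u v → 0 < c u v) {x y : V}
    (p : G.Walk u v) (q : G.Walk x y) (hpq : (p.edges : Multiset (Sym2 V)) ≤ q.edges) :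
    walkWeight c p + q.length ≤ walkWeight c q + p.length := by
  obtain ⟨N, hN⟩ := Multiset.le_iff_exists_add.1 hpq
  have hlen : q.length = p.length + N.card := by simpa using congrArg Multiset.card hN
  have hone : ∀ t ∈ N.map (Sym2.lift ⟨c, hsymm⟩), 1 ≤ t := by
    simp only [Multiset.mem_map, forall_exists_index, and_imp, forall_apply_eq_imp_iff₂]
    intro e he
    have heG : e ∈ G.edgeSet :=
      q.edges_subset_edgeSet (Multiset.mem_coe.1 (hN ▸ Multiset.mem_add.2 (.inr he)))
    induction e with | _ a b
    exact hpos a b heG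
  have hNw : N.card ≤ (N.map (Sym2.lift ⟨c, hsymm⟩)).sum := by
    simpa using Multiset.card_nsmul_le_sum hone
  rw [walkWeight_eq_sum_map_edges hsymm p, walkWeight_eq_sum_map_edges hsymm q, hN,
    Multiset.map_add, Multiset.sum_add]
  omega

end

/-- Let `G` be a connected graph on `n` vertices with positive
integer edge weights `c`, let `W` be the minimum weight of a closed walk
containing all vertices of `G`, and let `T` be a closed walk of length
`2n - 2 + k` containing all vertices of `G`. Then the weight of `T` is at
least `W + k`. -/
theorem statement9 {V : Type*} [Fintype V] {G : SimpleGraph V}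
    (hconn : G.Connected)
    (c : V → V → ℕ)
    (hsymm : ∀ u v : V, c u v = c v u)
    (hpos : ∀ u v : V, G.Adj u v → 0 < c u v)
    (W : ℕ)
    (hW : IsLeast {t | ∃ (x : V) (p : G.Walk x x),
      (∀ v : V, v ∈ p.support) ∧ walkWeight c p = t} W)
    (k : ℕ) (u : V) (T : G.Walk u u)
    (hspan : ∀ v : V, v ∈ T.support)
    (hlen : T.length = 2 * Fintype.card V - 2 + k) :
    W + k ≤ walkWeight c T := by
  obtain ⟨p, hp, hpT, hplen⟩ := exists_closed_walk_edges_le_length_le T hspan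
  have hWp : W ≤ walkWeight c p := hW.2 ⟨u, p, hp, rfl⟩
  have hpTw := walkWeight_add_length_le hsymm hpos p T hpT
  omega
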